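/- With q(λ) = √(λ−a)√(λ−b) holomorphic on ℂ\[a,b] and q(λ)/λ → 1 at ∞, and p holomorphic on a neighbourhood U of [a,b], the function h(λ) = q(λ) ∫_a^b (−i p(s)) / (q₊(s)(s−λ)) · ds/(2πi) satisfies the jump relation h₊(λ) + h₋(λ) = −i p(λ) for all λ ∈ (a,b). -/

import Mathlib

open Set Filter Complex MeasureTheory

lemma aux_branch (a b : ℝ) (hab : a < b) (q : ℂ → ℂ)
    (hq : DifferentiableOn ℂ q ((fun x : ℝ => (x : ℂ)) '' Icc a b)ᶜ)
    (hq2 : ∀ z ∈ ((fun x : ℝ => (x : ℂ)) '' Icc a b)ᶜ, q z ^ 2 = (z - a) * (z - b)) :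
    ∃ c : ℂ, (c = 1 ∨ c = -1) ∧ ∀ z : ℂ, z - b ∈ slitPlane →
      q z = c * exp ((log (z - a) + log (z - b)) / 2) := by
  set S : Set ℂ := {z : ℂ | z - b ∈ slitPlane} with hS
  have hSsub : S ⊆ ((fun x : ℝ => (x : ℂ)) '' Icc a b)ᶜ := by
    rintro z hz ⟨x, hx, rfl⟩
    simp only [hS, mem_ofPred_eq, mem_slitPlane_iff] at hz
    simp at hz
    linarith [hx.2]
  have hSa : ∀ z ∈ S, z - a ∈ slitPlane := by
    intro z hz
    simp only [hS, mem_ofPred_eq, mem_slitPlane_iff] at hz ⊢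
    simp at hz ⊢
    rcases hz with hz | hz
    · left; linarith
    · right; exact hz
  have hSc : IsPreconnected S := by
    have h1 : IsPreconnected slitPlane :=
      (starConvex_one_slitPlane.isPathConnected one_mem_slitPlane).isConnected.isPreconnected
    have h2 := h1.image (fun z => z + (b : ℂ)) (by fun_prop)
    convert h2 using 1
    ext z
    simp only [hS, mem_ofPred_eq, mem_image]
    constructor
    · intro hz; exact ⟨_, hz, by ring⟩
    · rintro ⟨w, hw, rfl⟩; simpa using hw
  have hcont : ContinuousOn (fun z : ℂ => exp ((log (z - a) + log (z - b)) / 2)) S := by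
    intro z hz
    have h1 : ContinuousAt (fun z : ℂ => log (z - a)) z :=
      ContinuousAt.clog (by fun_prop) (hSa z hz)
    have h2 : ContinuousAt (fun z : ℂ => log (z - b)) z :=
      ContinuousAt.clog (by fun_prop) hz
    exact (((h1.add h2).div_const 2).cexp).continuousWithinAt
  have key := hSc.eq_or_eq_neg_of_sq_eq (f := q) (hq.continuousOn.mono hSsub) hcont
    (by
      intro z hz
      simp only [Pi.pow_apply]
      rw [hq2 z (hSsub hz), ← exp_nat_mul]
      have : ((2 : ℕ) : ℂ) * ((log (z - a) + log (z - b)) / 2) = log (z - a) + log (z - b) := by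
        push_cast; ring
      rw [this, exp_add, exp_log (slitPlane_ne_zero (hSa z hz)), exp_log (slitPlane_ne_zero hz)])
    (fun _ => exp_ne_zero _)
  rcases key with k | k
  · exact ⟨1, Or.inl rfl, fun z hz => by rw [k hz, one_mul]⟩
  · exact ⟨-1, Or.inr rfl, fun z hz => by rw [k hz]; simp⟩

lemma aux_path (s t σ : ℝ) : Tendsto (fun ε : ℝ => ((s : ℂ) + σ * (ε * I)) - t)
    (nhdsWithin 0 (Ioi 0)) (nhds ((s : ℂ) - t)) := by
  have : Continuous (fun ε : ℝ => ((s : ℂ) + σ * (ε * I)) - t) := by fun_prop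
  have h := this.tendsto 0
  simp at h
  simpa using h.mono_left nhdsWithin_le_nhds

lemma aux_lim (a b : ℝ) (s : ℝ) (hs : s ∈ Ioo a b) (σ : ℝ) (hσ : σ = 1 ∨ σ = -1) :
    Tendsto (fun ε : ℝ => exp ((log (((s : ℂ) + σ * (ε * I)) - a) +
        log (((s : ℂ) + σ * (ε * I)) - b)) / 2))
      (nhdsWithin 0 (Ioi 0))
      (nhds (σ * I * (Real.exp ((Real.log (s - a) + Real.log (b - s)) / 2) : ℝ))) := by
  have h1 : Tendsto (fun ε : ℝ => log (((s : ℂ) + σ * (ε * I)) - a)) (nhdsWithin 0 (Ioi 0))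
      (nhds (Real.log (s - a) : ℝ)) := by
    have : (s : ℂ) - a ∈ slitPlane := by
      rw [mem_slitPlane_iff]; left; simp; exact hs.1
    have h := (aux_path s a σ).clog this
    rw [ofReal_log (by linarith [hs.1])]
    push_cast
    exact h
  have hre : ((s : ℂ) - b).re < 0 := by simp; exact hs.2
  have him : ((s : ℂ) - b).im = 0 := by simp
  have hnorm : ‖(s : ℂ) - b‖ = b - s := by
    rw [← ofReal_sub, norm_real, Real.norm_eq_abs, abs_of_neg (by linarith [hs.2])]; ring
  have h2 : Tendsto (fun ε : ℝ => log (((s : ℂ) + σ * (ε * I)) - b)) (nhdsWithin 0 (Ioi 0))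
      (nhds ((Real.log (b - s) : ℝ) + σ * (Real.pi * I))) := by
    rcases hσ with rfl | rfl
    · have h := tendsto_log_nhdsWithin_im_nonneg_of_re_neg_of_im_zero hre him
      rw [hnorm] at h
      rw [ofReal_one, one_mul]
      refine h.comp (tendsto_nhdsWithin_iff.2 ⟨by simpa using aux_path s b 1, ?_⟩)
      filter_upwards [self_mem_nhdsWithin] with ε hε
      have : (0:ℝ) < ε := hε
      simp [this.le]
    · have h := tendsto_log_nhdsWithin_im_neg_of_re_neg_of_im_zero hre him
      rw [hnorm] at h
      have e : ((Real.log (b - s) : ℝ) : ℂ) + ((-1 : ℝ) : ℂ) * (Real.pi * I)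
        = (Real.log (b - s) : ℝ) - Real.pi * I := by push_cast; ring
      rw [e]
      refine h.comp (tendsto_nhdsWithin_iff.2 ⟨by simpa using aux_path s b (-1), ?_⟩)
      filter_upwards [self_mem_nhdsWithin] with ε hε
      have : (0:ℝ) < ε := hε
      simp [this]
  have h3 := ((h1.add h2).div_const 2).cexp
  convert h3 using 2
  have e : (((Real.log (s - a) : ℝ) : ℂ) + ((Real.log (b - s) : ℝ) + σ * (Real.pi * I))) / 2
    = (((Real.log (s - a) + Real.log (b - s)) / 2 : ℝ) : ℂ) + σ * (Real.pi / 2 * I) := by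
    push_cast; ring
  rw [e, exp_add, ofReal_exp, mul_comm]
  congr 1
  rcases hσ with rfl | rfl
  · simp [exp_pi_div_two_mul_I]
  · simp [Complex.exp_neg, exp_pi_div_two_mul_I]

lemma aux_poisson (g : ℝ → ℂ) (hg : Integrable g) (x : ℝ) (hx : ContinuousAt g x) :
    Tendsto (fun ε : ℝ => (∫ s : ℝ, g s * ((s : ℂ) - (x + ε * I))⁻¹) -
        ∫ s : ℝ, g s * ((s : ℂ) - (x - ε * I))⁻¹)
      (nhdsWithin 0 (Ioi 0)) (nhds (2 * Real.pi * I * g x)) := by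
  have hP := tendsto_integral_comp_smul_smul_of_integrable' (μ := (volume : Measure ℝ))
    (φ := fun y : ℝ => Real.pi⁻¹ * (1 + y ^ 2)⁻¹) (fun y => by positivity)
    (by rw [integral_const_mul, integral_univ_inv_one_add_sq]; field_simp)
    (by
      have h1 : Tendsto (fun y : ℝ => ‖y‖) (Bornology.cobounded ℝ) atTop :=
        tendsto_norm_cobounded_atTop
      have h2 : Tendsto (fun y : ℝ => Real.pi⁻¹ * y⁻¹) atTop (nhds 0) := by
        simpa using (tendsto_inv_atTop_zero (𝕜 := ℝ)).const_mul Real.pi⁻¹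
      refine squeeze_zero (fun y => by positivity) (fun y => ?_) (h2.comp h1)
      simp only [Module.finrank_self, pow_one, Function.comp]
      rcases eq_or_ne y 0 with rfl | hy
      · simp
      have hy' : 0 < ‖y‖ := norm_pos_iff.2 hy
      have e : y ^ 2 = ‖y‖ ^ 2 := by simp
      rw [e]
      have : ‖y‖ * (1 + ‖y‖ ^ 2)⁻¹ ≤ ‖y‖⁻¹ := by
        rw [← div_eq_mul_inv, div_le_iff₀ (by positivity), inv_mul_eq_div, le_div_iff₀ hy']
        nlinarith
      have hpi : 0 ≤ Real.pi⁻¹ := by positivity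
      nlinarith [mul_le_mul_of_nonneg_left this hpi])
    hg hx
  have hP2 := (hP.comp tendsto_inv_nhdsGT_zero).const_mul (2 * Real.pi * I)
  refine hP2.congr' ?_
  filter_upwards [self_mem_nhdsWithin] with ε hε
  have hε : 0 < ε := hε
  have hint : ∀ σ : ℝ, |σ| = 1 → Integrable (fun s : ℝ => g s * ((s : ℂ) - (x + σ * ε * I))⁻¹) := by
    intro σ hσ
    have him : ∀ s : ℝ, ε ≤ ‖(s : ℂ) - (x + σ * ε * I)‖ := by
      intro s
      have := abs_im_le_norm ((s : ℂ) - (x + σ * ε * I))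
      simpa [abs_mul, hσ, abs_of_pos hε] using this
    refine hg.mul_bdd (c := ε⁻¹) ?_ ?_
    · refine Continuous.aestronglyMeasurable (Continuous.inv₀ (by fun_prop) fun s => ?_)
      exact norm_pos_iff.1 (lt_of_lt_of_le hε (him s))
    · refine Eventually.of_forall fun s => ?_
      rw [norm_inv]
      exact inv_anti₀ hε (him s)
  have i1 := hint 1 (by simp)
  have i2 := hint (-1) (by simp)
  simp only [ofReal_one, one_mul, ofReal_neg, neg_mul, ← sub_eq_add_neg] at i1 i2
  rw [← integral_sub i1 i2]
  simp only [Function.comp]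
  rw [← integral_const_mul]
  refine integral_congr_ae (Eventually.of_forall fun s => ?_)
  simp only [Module.finrank_self, pow_one, real_smul, smul_eq_mul]
  have n1 : (s : ℂ) - (x + ε * I) ≠ 0 := by
    intro h; have := congrArg im h; simp at this; exact hε.ne' this
  have n2 : (s : ℂ) - (x - ε * I) ≠ 0 := by
    intro h; have := congrArg im h; simp at this; exact hε.ne' this
  have n3 : (ε : ℂ) ≠ 0 := by exact_mod_cast hε.ne'
  have n4 : (Real.pi : ℂ) ≠ 0 := by exact_mod_cast Real.pi_ne_zero
  have e1 : ((s : ℂ) - (x + ε * I)) * ((s : ℂ) - (x - ε * I)) = ε ^ 2 * (1 + ((ε : ℂ)⁻¹ * (x - s)) ^ 2) := by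
    field_simp
    linear_combination (-(ε : ℂ) ^ 2) * I_sq
  have n5 : 1 + ((ε : ℂ)⁻¹ * (x - s)) ^ 2 ≠ 0 := by
    intro h; rw [h, mul_zero] at e1; exact (mul_ne_zero n1 n2) e1
  rw [← mul_sub, inv_sub_inv n1 n2, e1]
  push_cast
  generalize 1 + ((ε : ℂ)⁻¹ * (x - s)) ^ 2 = W at *
  field_simp
  ring

lemma aux_integrable (a b : ℝ) (hab : a < b) :
    IntegrableOn (fun s : ℝ => (Real.exp ((Real.log (s - a) + Real.log (b - s)) / 2))⁻¹)
      (Ioo a b) := by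
  have h0 : ∀ c d : ℝ, IntervalIntegrable (fun x : ℝ => x ^ (-(1/2) : ℝ)) volume c d := fun c d =>
    intervalIntegral.intervalIntegrable_rpow' (by norm_num)
  have h1 : IntegrableOn (fun s : ℝ => (s - a) ^ (-(1/2) : ℝ)) (Ioo a b) := by
    have := (h0 0 (b - a)).comp_sub_right a
    simp only [zero_add, sub_add_cancel] at this
    exact ((intervalIntegrable_iff_integrableOn_Ioo_of_le hab.le).1 this)
  have h2 : IntegrableOn (fun s : ℝ => (b - s) ^ (-(1/2) : ℝ)) (Ioo a b) := by
    have := ((h0 0 (b - a)).comp_sub_left b).symm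
    simp only [sub_zero, sub_sub_cancel] at this
    exact ((intervalIntegrable_iff_integrableOn_Ioo_of_le hab.le).1 this)
  have h3 := (h1.add h2).const_mul (((b - a) / 2) ^ (-(1/2) : ℝ))
  refine Integrable.mono' h3 ?_ ?_
  · exact Measurable.aestronglyMeasurable (by fun_prop)
  · filter_upwards [ae_restrict_mem measurableSet_Ioo] with s hs
    have hu : 0 < s - a := by linarith [hs.1]
    have hv : 0 < b - s := by linarith [hs.2]
    have hL : 0 < (b - a) / 2 := by linarith
    have e : (Real.exp ((Real.log (s - a) + Real.log (b - s)) / 2))⁻¹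
        = (s - a) ^ (-(1/2) : ℝ) * (b - s) ^ (-(1/2) : ℝ) := by
      rw [Real.rpow_def_of_pos hu, Real.rpow_def_of_pos hv, ← Real.exp_neg, ← Real.exp_add]
      congr 1; ring
    rw [Real.norm_of_nonneg (by positivity), e]
    simp only [Pi.add_apply]
    have pu : 0 < (s - a) ^ (-(1/2) : ℝ) := Real.rpow_pos_of_pos hu _
    have pv : 0 < (b - s) ^ (-(1/2) : ℝ) := Real.rpow_pos_of_pos hv _
    have pL : 0 < ((b - a) / 2) ^ (-(1/2) : ℝ) := Real.rpow_pos_of_pos hL _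
    rcases le_total ((b - a) / 2) (s - a) with hc | hc
    · have := Real.rpow_le_rpow_of_nonpos hL hc (show (-(1/2) : ℝ) ≤ 0 by norm_num)
      nlinarith [mul_pos pL pu, mul_le_mul_of_nonneg_right this pv.le]
    · have := Real.rpow_le_rpow_of_nonpos hL (show (b - a) / 2 ≤ b - s by linarith)
        (show (-(1/2) : ℝ) ≤ 0 by norm_num)
      nlinarith [mul_pos pL pv, mul_le_mul_of_nonneg_right this pu.le]

theorem h_function_jump_relation (a b : ℝ) (hab : a < b)
    (U : Set ℂ) (hU : IsOpen U) (hUab : (fun x : ℝ => (x : ℂ)) '' Icc a b ⊆ U)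
    (p : ℂ → ℂ) (hp : DifferentiableOn ℂ p U)
    (q : ℂ → ℂ)
    (hq : DifferentiableOn ℂ q ((fun x : ℝ => (x : ℂ)) '' Icc a b)ᶜ)
    (hq2 : ∀ z ∈ ((fun x : ℝ => (x : ℂ)) '' Icc a b)ᶜ, q z ^ 2 = (z - a) * (z - b))
    (hqnorm : Tendsto (fun x : ℝ => q x / x) atTop (nhds 1))
    (qplus : ℝ → ℂ)
    (hqplus : ∀ s ∈ Ioo a b,
      Tendsto (fun ε : ℝ => q (s + ε * Complex.I)) (nhdsWithin 0 (Ioi 0)) (nhds (qplus s)))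
    (h : ℂ → ℂ)
    (hdef : ∀ z ∈ ((fun x : ℝ => (x : ℂ)) '' Icc a b)ᶜ,
      h z = q z * ∫ s in Ioo a b,
        (-Complex.I * p (s : ℂ)) / (qplus s * ((s : ℂ) - z)) / (2 * Real.pi * Complex.I))
    (lam : ℝ) (hlam : lam ∈ Ioo a b) (hplus hminus : ℂ)
    (hhp : Tendsto (fun ε : ℝ => h (lam + ε * Complex.I))
      (nhdsWithin 0 (Ioi 0)) (nhds hplus))
    (hhm : Tendsto (fun ε : ℝ => h (lam - ε * Complex.I))
      (nhdsWithin 0 (Ioi 0)) (nhds hminus)) :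
    hplus + hminus = -Complex.I * p (lam : ℂ) := by
  obtain ⟨c, hc, hqc⟩ := aux_branch a b hab q hq hq2
  have hc2 : c * c = 1 := by rcases hc with rfl | rfl <;> norm_num
  have hc0 : c ≠ 0 := by rintro rfl; simp at hc2
  set E : ℝ → ℝ := fun s => Real.exp ((Real.log (s - a) + Real.log (b - s)) / 2) with hE
  have hE0 : ∀ s, (E s : ℂ) ≠ 0 := fun s => by exact_mod_cast (Real.exp_pos _).ne'
  have hql : ∀ s ∈ Ioo a b, ∀ σ : ℝ, (σ = 1 ∨ σ = -1) →
      Tendsto (fun ε : ℝ => q ((s : ℂ) + σ * (ε * I))) (nhdsWithin 0 (Ioi 0))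
        (nhds (c * (σ * I * (E s : ℝ)))) := by
    intro s hs σ hσ
    refine ((aux_lim a b s hs σ hσ).const_mul c).congr' ?_
    filter_upwards [self_mem_nhdsWithin] with ε hε
    have hε : 0 < ε := hε
    rw [hqc]
    rw [mem_slitPlane_iff]
    right
    rcases hσ with rfl | rfl <;> simp [hε.ne']
  have hqp : ∀ s ∈ Ioo a b, qplus s = c * (I * (E s : ℝ)) := by
    intro s hs
    have h1 := hql s hs 1 (Or.inl rfl)
    simp only [ofReal_one, one_mul] at h1
    exact tendsto_nhds_unique (hqplus s hs) h1
  set f : ℝ → ℂ := fun s => (-I * p (s : ℂ)) / (c * (I * (E s : ℝ))) / (2 * Real.pi * I) with hf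
  have hpc : ContinuousOn (fun s : ℝ => p (s : ℂ)) (Icc a b) :=
    hp.continuousOn.comp (by fun_prop) (fun s hs => hUab ⟨s, hs, rfl⟩)
  have hEc : ContinuousOn E (Ioo a b) := by
    intro s hs
    have hu : s - a ≠ 0 := by linarith [hs.1] |> fun (h : 0 < s - a) => h.ne'
    have hv : b - s ≠ 0 := by linarith [hs.2] |> fun (h : 0 < b - s) => h.ne'
    exact ContinuousAt.continuousWithinAt (by fun_prop (disch := assumption))
  have hfi : IntegrableOn f (Ioo a b) := by
    obtain ⟨M, hM⟩ := isCompact_Icc.exists_bound_of_continuousOn hpc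
    have h1 : IntegrableOn (fun s : ℝ => (((E s)⁻¹ : ℝ) : ℂ)) (Ioo a b) :=
      (aux_integrable a b hab).ofReal
    have h2 := (Integrable.bdd_mul (c := M) h1
      ((hpc.mono Ioo_subset_Icc_self).aestronglyMeasurable measurableSet_Ioo)
      (by filter_upwards [ae_restrict_mem measurableSet_Ioo] with s hs
          exact hM s (Ioo_subset_Icc_self hs))).const_mul (-I / (c * I) / (2 * Real.pi * I))
    refine h2.congr (Eventually.of_forall fun s => ?_)
    simp only [hf, div_eq_mul_inv, mul_inv, ofReal_inv]
    ring
  have hfc : ContinuousAt f lam := by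
    have hn : Ioo a b ∈ nhds lam := isOpen_Ioo.mem_nhds hlam
    have h1 : ContinuousAt (fun s : ℝ => p (s : ℂ)) lam :=
      (hpc.mono Ioo_subset_Icc_self).continuousAt hn
    have h2 : ContinuousAt (fun s : ℝ => (E s : ℂ)) lam :=
      continuous_ofReal.continuousAt.comp (hEc.continuousAt hn)
    exact ((continuousAt_const.mul h1).div (continuousAt_const.mul (continuousAt_const.mul h2))
      (mul_ne_zero hc0 (mul_ne_zero I_ne_zero (hE0 lam)))).div_const _
  set g : ℝ → ℂ := (Ioo a b).indicator f with hg
  have hgi : Integrable g := hfi.integrable_indicator measurableSet_Ioo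
  have hgf : g lam = f lam := indicator_of_mem hlam f
  have hgc : ContinuousAt g lam := by
    refine hfc.congr ?_
    filter_upwards [isOpen_Ioo.mem_nhds hlam] with s hs
    exact (indicator_of_mem hs f).symm
  have hP := aux_poisson g hgi lam hgc
  have hrep : ∀ z ∈ ((fun x : ℝ => (x : ℂ)) '' Icc a b)ᶜ,
      h z = q z * ∫ s : ℝ, g s * ((s : ℂ) - z)⁻¹ := by
    intro z hz
    rw [hdef z hz]
    congr 1
    rw [← integral_indicator measurableSet_Ioo]
    refine integral_congr_ae (Eventually.of_forall fun s => ?_)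
    by_cases hs : s ∈ Ioo a b
    · simp only [hg, indicator_of_mem hs, hf, hqp s hs]
      simp only [div_eq_mul_inv, mul_inv]
      ring
    · simp [hg, indicator_of_notMem hs]
  have hQ : c * (I * (E lam : ℝ)) ≠ 0 := mul_ne_zero hc0 (mul_ne_zero I_ne_zero (hE0 lam))
  have q1 := hql lam hlam 1 (Or.inl rfl)
  have q2 := hql lam hlam (-1) (Or.inr rfl)
  simp only [ofReal_one, one_mul, ofReal_neg, neg_mul, mul_neg, ← sub_eq_add_neg] at q1 q2
  have hlim := (hhp.div q1 hQ).sub (hhm.div q2 (neg_ne_zero.2 hQ))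
  have heq := tendsto_nhds_unique (hlim.congr' ?_) hP
  · rw [hgf, hf] at heq
    have n4 : (Real.pi : ℂ) ≠ 0 := by exact_mod_cast Real.pi_ne_zero
    have e : 2 * Real.pi * I * ((-I * p (lam : ℂ)) / (c * (I * (E lam : ℝ))) / (2 * Real.pi * I))
        = (-I * p (lam : ℂ)) / (c * (I * (E lam : ℝ))) := by
      have n6 : (2 * Real.pi * I : ℂ) ≠ 0 := mul_ne_zero (mul_ne_zero two_ne_zero n4) I_ne_zero
      exact mul_div_cancel₀ _ n6
    simp only [e] at heq
    rw [div_neg, sub_neg_eq_add, ← add_div] at heq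
    exact (div_left_inj' hQ).1 heq
  · filter_upwards [self_mem_nhdsWithin, q1.eventually_ne hQ,
      q2.eventually_ne (neg_ne_zero.2 hQ)] with ε hε k1 k2
    have hε : 0 < ε := hε
    have m1 : (lam : ℂ) + ε * I ∈ ((fun x : ℝ => (x : ℂ)) '' Icc a b)ᶜ := by
      rintro ⟨x, -, hx⟩
      have := congrArg im hx
      simp at this
      exact hε.ne this
    have m2 : (lam : ℂ) - ε * I ∈ ((fun x : ℝ => (x : ℂ)) '' Icc a b)ᶜ := by
      rintro ⟨x, -, hx⟩
      have := congrArg im hx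
      simp at this
      exact hε.ne' this
    simp only [Pi.div_apply]
    rw [hrep _ m1, hrep _ m2, mul_div_cancel_left₀ _ k1, mul_div_cancel_left₀ _ k2]
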